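/- The operators satisfy the q-deformed antisymmetry relation of the momentum subalgebra: P₋₁ P₁ − P₁ P₋₁ = (q^{−3/2} − q^{−1/2}) P₀² as linear operators on V. -/

import Mathlib

/- The irreducible Hilbert-space representation of highest weight `w` of the q-Euclidean
algebra `U_q(e³)` (Theorem 3 of the paper): `S` is the index set of the q-lattice,
`V` the space of finitely supported functions `S → ℂ` with canonical basis `e`,
and `P0, P1, Pm1, Lam, LamInv, K, Lp, Lm` realize the generators
`p⁰, p¹, p⁻¹, Λ, Λ⁻¹, k¹, L^{01}, L^{−1,0}`. -/

noncomputable section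

/-- The q-lattice index set `S = {(π₀,π₁,j) ∈ ℤ³ : π₀ ≥ 0, j ≤ π₀}`. -/
structure SIdx : Type where
  π0 : ℤ
  π1 : ℤ
  j : ℤ
  hπ0 : 0 ≤ π0
  hj : j ≤ π0

instance : DecidableEq SIdx := fun _ _ => Classical.dec _

/-- `V`: finitely supported functions `S → ℂ`. -/
abbrev V : Type := SIdx →₀ ℂ

/-- The canonical basis vector `e_{π₀,π₁,j}`. -/
def e (s : SIdx) : V := Finsupp.single s 1

/-- The linear operator on `V` determined by its values on the canonical basis. -/
def opOf (g : SIdx → V) : V →ₗ[ℂ] V :=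
  Finsupp.lsum ℂ fun s => LinearMap.toSpanSingleton ℂ V (g s)

/-- `P₀ e_{π₀,π₁,j} = ε M (1+q⁻¹)^(1/2) q^(2+π₀+π₁) e_{π₀,π₁,j}`. -/
def P0 (q M ε : ℝ) : V →ₗ[ℂ] V :=
  opOf fun s => ((ε * M * Real.sqrt (1 + q⁻¹) * q ^ (2 + s.π0 + s.π1) : ℝ) : ℂ) • e s

/-- `P₁ e_{π₀,π₁,j} = M (1−q^(2π₀+2))^(1/2) q^(1+π₁) e_{π₀+1,π₁,j+1}`. -/
def P1 (q M : ℝ) : V →ₗ[ℂ] V :=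
  opOf fun s => ((M * Real.sqrt (1 - q ^ (2 * s.π0 + 2)) * q ^ (1 + s.π1) : ℝ) : ℂ) •
    e ⟨s.π0 + 1, s.π1, s.j + 1, by have h0 := s.hπ0; have h1 := s.hj; omega, by have h0 := s.hπ0; have h1 := s.hj; omega⟩

/-- `P₋₁ e_{π₀,π₁,j} = M (1−q^(2π₀))^(1/2) q^(1/2+π₁) e_{π₀−1,π₁,j−1}` (zero if `π₀ = 0`). -/
def Pm1 (q M : ℝ) : V →ₗ[ℂ] V :=
  opOf fun s =>
    if h : 0 < s.π0 then
      ((M * Real.sqrt (1 - q ^ (2 * s.π0)) * q ^ ((1 : ℝ) / 2 + (s.π1 : ℝ)) : ℝ) : ℂ) •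
        e ⟨s.π0 - 1, s.π1, s.j - 1, by have h0 := s.hπ0; have h1 := s.hj; omega, by have h0 := s.hπ0; have h1 := s.hj; omega⟩
    else 0

/-- `Λ e_{π₀,π₁,j} = e_{π₀,π₁+1,j}`. -/
def Lam : V →ₗ[ℂ] V := opOf fun s => e ⟨s.π0, s.π1 + 1, s.j, s.hπ0, s.hj⟩

/-- `Λ⁻¹ e_{π₀,π₁,j} = e_{π₀,π₁−1,j}`. -/
def LamInv : V →ₗ[ℂ] V := opOf fun s => e ⟨s.π0, s.π1 - 1, s.j, s.hπ0, s.hj⟩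

/-- `K e_{π₀,π₁,j} = q^(2j+w) e_{π₀,π₁,j}`. -/
def K (q w : ℝ) : V →ₗ[ℂ] V :=
  opOf fun s => ((q ^ (2 * (s.j : ℝ) + w) : ℝ) : ℂ) • e s

/-- `L⁺ e_{π₀,π₁,j} = q^(−3/2−π₀) [(1+q^(π₀−j−w))(1−q^(π₀−j))/((q⁻¹−1)(1−q))]^(1/2)
    e_{π₀,π₁,j+1}` (zero if `j = π₀`). -/
def Lp (q w : ℝ) : V →ₗ[ℂ] V :=
  opOf fun s =>
    if h : s.j < s.π0 then
      ((q ^ (-(3 : ℝ) / 2 - (s.π0 : ℝ)) *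
          Real.sqrt ((1 + q ^ ((s.π0 : ℝ) - (s.j : ℝ) - w)) *
            (1 - q ^ ((s.π0 : ℝ) - (s.j : ℝ))) / ((q⁻¹ - 1) * (1 - q))) : ℝ) : ℂ) •
        e ⟨s.π0, s.π1, s.j + 1, s.hπ0, by have h0 := s.hπ0; have h1 := s.hj; omega⟩
    else 0

/-- `L⁻ e_{π₀,π₁,j} = q^(−π₀) [(1+q^(π₀−j+1−w))(1−q^(π₀−j+1))/((q⁻¹−1)(1−q))]^(1/2)
    e_{π₀,π₁,j−1}`. -/
def Lm (q w : ℝ) : V →ₗ[ℂ] V :=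
  opOf fun s =>
    ((q ^ (-(s.π0 : ℝ)) *
        Real.sqrt ((1 + q ^ ((s.π0 : ℝ) - (s.j : ℝ) + 1 - w)) *
          (1 - q ^ ((s.π0 : ℝ) - (s.j : ℝ) + 1)) / ((q⁻¹ - 1) * (1 - q))) : ℝ) : ℂ) •
      e ⟨s.π0, s.π1, s.j - 1, s.hπ0, by have h0 := s.hπ0; have h1 := s.hj; omega⟩

/-!
The products `P₋₁ P₁`, `P₁ P₋₁` and `P₀²` are diagonal in the canonical basis. Both
`P₋₁ P₁ e_{π₀,π₁,j}` and `P₁ P₋₁ e_{π₀+1,π₁,j+1}` pick up the same product of two matrix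
coefficients, namely `M² (1 - q^(2π₀+2)) q^(3/2+2π₁)`. The resulting formula for `P₁ P₋₁` also
covers the boundary `π₀ = 0`, where `P₋₁` vanishes, since there `1 - q^(2π₀) = 0`. Hence the
commutator has eigenvalue `M² (q^(2π₀) - q^(2π₀+2)) q^(3/2+2π₁)`, which is that of `P₀²` rescaled
because `(q^(-3/2) - q^(-1/2)) (1 + q⁻¹) = (1 - q²) q^(-5/2)`.
-/

theorem opOf_e (g : SIdx → V) (s : SIdx) : opOf g (e s) = g s := by
  simp [opOf, e]

theorem linearMap_ext_e {f g : V →ₗ[ℂ] V} (h : ∀ s, f (e s) = g (e s)) : f = g :=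
  Finsupp.lhom_ext' fun s => LinearMap.ext_ring (h s)

namespace SIdx

/-- The shift `(π₀,π₁,j) ↦ (π₀+1,π₁,j+1)` of the q-lattice, along which `P₁` raises and `P₋₁`
lowers. -/
def raise (s : SIdx) : SIdx :=
  ⟨s.π0 + 1, s.π1, s.j + 1, add_nonneg s.hπ0 zero_le_one, add_le_add_left s.hj 1⟩

theorem π0_eq_zero_or_exists_eq_raise (s : SIdx) : s.π0 = 0 ∨ ∃ t : SIdx, s = t.raise := by
  obtain ⟨a, b, j, ha, hj⟩ := s
  refine ha.eq_or_lt.imp Eq.symm fun hpos => ?_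
  exact ⟨⟨a - 1, b, j - 1, Int.sub_nonneg_of_le hpos, sub_le_sub_right hj 1⟩, by simp [raise]⟩

end SIdx

section Action

variable (q M : ℝ)

theorem P1_e (s : SIdx) :
    P1 q M (e s) =
      ((M * √(1 - q ^ (2 * s.π0 + 2)) * q ^ (1 + s.π1) : ℝ) : ℂ) • e s.raise :=
  opOf_e _ s

theorem Pm1_e_raise (s : SIdx) :
    Pm1 q M (e s.raise) =
      ((M * √(1 - q ^ (2 * s.π0 + 2)) * q ^ ((1 : ℝ) / 2 + (s.π1 : ℝ)) : ℝ) : ℂ) • e s := by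
  have hpos : 0 < s.π0 + 1 := Int.lt_add_one_of_le s.hπ0
  simp [Pm1, opOf_e, SIdx.raise, hpos, mul_add]

theorem Pm1_e_of_π0_eq_zero {s : SIdx} (hs : s.π0 = 0) : Pm1 q M (e s) = 0 := by
  simp [Pm1, opOf_e, hs]

theorem P0_e (ε : ℝ) (s : SIdx) :
    P0 q M ε (e s) = ((ε * M * √(1 + q⁻¹) * q ^ (2 + s.π0 + s.π1) : ℝ) : ℂ) • e s :=
  opOf_e _ s

end Action

section Eigenvalues

variable {q : ℝ} (M : ℝ)

theorem one_sub_zpow_nonneg (hq0 : 0 < q) (hq1 : q ≤ 1) {n : ℤ} (hn : 0 ≤ n) :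
    0 ≤ 1 - q ^ n :=
  sub_nonneg.2 (zpow_le_one₀ hq0 hq1 hn)

theorem ladder_coeff_mul (hq0 : 0 < q) {x : ℝ} (hx : 0 ≤ x) (n : ℤ) :
    (M * √x * q ^ (1 + n)) * (M * √x * q ^ ((1 : ℝ) / 2 + (n : ℝ))) =
      M ^ 2 * x * q ^ ((3 : ℝ) / 2 + 2 * (n : ℝ)) := by
  have hpow : q ^ (1 + n) * q ^ ((1 : ℝ) / 2 + (n : ℝ)) = q ^ ((3 : ℝ) / 2 + 2 * (n : ℝ)) := by
    rw [← Real.rpow_intCast, ← Real.rpow_add hq0]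
    push_cast
    ring_nf
  calc (M * √x * q ^ (1 + n)) * (M * √x * q ^ ((1 : ℝ) / 2 + (n : ℝ)))
      = M ^ 2 * √x ^ 2 * (q ^ (1 + n) * q ^ ((1 : ℝ) / 2 + (n : ℝ))) := by ring
    _ = M ^ 2 * x * q ^ ((3 : ℝ) / 2 + 2 * (n : ℝ)) := by rw [Real.sq_sqrt hx, hpow]

theorem Pm1_P1_e (hq0 : 0 < q) (hq1 : q ≤ 1) (s : SIdx) :
    Pm1 q M (P1 q M (e s)) =
      ((M ^ 2 * (1 - q ^ (2 * s.π0 + 2)) * q ^ ((3 : ℝ) / 2 + 2 * (s.π1 : ℝ)) : ℝ) : ℂ) • e s := by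
  have hnonneg : 0 ≤ 1 - q ^ (2 * s.π0 + 2) :=
    one_sub_zpow_nonneg hq0 hq1 (by have := s.hπ0; positivity)
  rw [P1_e, map_smul, Pm1_e_raise, smul_smul, ← Complex.ofReal_mul,
    ladder_coeff_mul M hq0 hnonneg]

theorem P1_Pm1_e (hq0 : 0 < q) (hq1 : q ≤ 1) (s : SIdx) :
    P1 q M (Pm1 q M (e s)) =
      ((M ^ 2 * (1 - q ^ (2 * s.π0)) * q ^ ((3 : ℝ) / 2 + 2 * (s.π1 : ℝ)) : ℝ) : ℂ) • e s := by
  obtain hs | ⟨t, rfl⟩ := s.π0_eq_zero_or_exists_eq_raise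
  · simp [Pm1_e_of_π0_eq_zero q M hs, hs]
  · have hnonneg : 0 ≤ 1 - q ^ (2 * t.π0 + 2) :=
      one_sub_zpow_nonneg hq0 hq1 (by have := t.hπ0; positivity)
    have hexp : 2 * t.raise.π0 = 2 * t.π0 + 2 := mul_add_one 2 t.π0
    rw [Pm1_e_raise, map_smul, P1_e, smul_smul, ← Complex.ofReal_mul, mul_comm,
      ladder_coeff_mul M hq0 hnonneg, hexp]
    rfl

theorem P0_P0_e (hq : 0 ≤ q) (ε : ℝ) (s : SIdx) :
    P0 q M ε (P0 q M ε (e s)) =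
      ((ε ^ 2 * M ^ 2 * (1 + q⁻¹) * q ^ (2 * (2 + s.π0 + s.π1)) : ℝ) : ℂ) • e s := by
  have hsqrt : √(1 + q⁻¹) ^ 2 = 1 + q⁻¹ := Real.sq_sqrt (by positivity)
  rw [P0_e, map_smul, P0_e, smul_smul, ← Complex.ofReal_mul, ← sq, mul_pow, mul_pow, mul_pow,
    hsqrt, ← zpow_natCast (q ^ _), ← zpow_mul, Nat.cast_ofNat,
    mul_comm (2 + s.π0 + s.π1)]

end Eigenvalues

theorem rpow_sub_rpow_mul_one_add_inv {q : ℝ} (hq0 : 0 < q) :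
    (q ^ (-(3 : ℝ) / 2) - q ^ (-(1 : ℝ) / 2)) * (1 + q⁻¹) = (1 - q ^ 2) * q ^ (-(5 : ℝ) / 2) := by
  have h3 : q ^ (-(3 : ℝ) / 2) = q ^ (-(5 : ℝ) / 2) * q := by
    rw [← Real.rpow_add_one hq0.ne']; norm_num
  have h1 : q ^ (-(1 : ℝ) / 2) = q ^ (-(5 : ℝ) / 2) * q ^ 2 := by
    rw [← Real.rpow_add_natCast hq0.ne']; norm_num
  rw [h3, h1]
  field_simp
  ring

theorem eigenvalue_sub_eigenvalue {q : ℝ} (hq0 : 0 < q) (M : ℝ) (a b : ℤ) :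
    M ^ 2 * (1 - q ^ (2 * a + 2)) * q ^ ((3 : ℝ) / 2 + 2 * (b : ℝ)) -
        M ^ 2 * (1 - q ^ (2 * a)) * q ^ ((3 : ℝ) / 2 + 2 * (b : ℝ)) =
      (q ^ (-(3 : ℝ) / 2) - q ^ (-(1 : ℝ) / 2)) *
        (M ^ 2 * (1 + q⁻¹) * q ^ (2 * (2 + a + b))) := by
  have hstep : q ^ (2 * a + 2) = q ^ (2 * a) * q ^ 2 := zpow_add₀ hq0.ne' _ _
  have hpow : q ^ (2 * a) * q ^ ((3 : ℝ) / 2 + 2 * (b : ℝ)) =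
      q ^ (-(5 : ℝ) / 2) * q ^ (2 * (2 + a + b)) := by
    rw [← Real.rpow_intCast, ← Real.rpow_intCast, ← Real.rpow_add hq0, ← Real.rpow_add hq0]
    push_cast
    ring_nf
  calc M ^ 2 * (1 - q ^ (2 * a + 2)) * q ^ ((3 : ℝ) / 2 + 2 * (b : ℝ)) -
        M ^ 2 * (1 - q ^ (2 * a)) * q ^ ((3 : ℝ) / 2 + 2 * (b : ℝ))
      = M ^ 2 * (1 - q ^ 2) * (q ^ (2 * a) * q ^ ((3 : ℝ) / 2 + 2 * (b : ℝ))) := by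
        rw [hstep]; ring
    _ = M ^ 2 * ((1 - q ^ 2) * q ^ (-(5 : ℝ) / 2)) * q ^ (2 * (2 + a + b)) := by
        rw [hpow]; ring
    _ = (q ^ (-(3 : ℝ) / 2) - q ^ (-(1 : ℝ) / 2)) *
        (M ^ 2 * (1 + q⁻¹) * q ^ (2 * (2 + a + b))) := by
        rw [← rpow_sub_rpow_mul_one_add_inv hq0]; ring

/-- The q-deformed antisymmetry relation of the momentum subalgebra:
`P₋₁ P₁ − P₁ P₋₁ = (q^(−3/2) − q^(−1/2)) P₀²`. -/
theorem momentum_q_antisymmetry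
    (q M ε w : ℝ) (hq0 : 0 < q) (hq1 : q < 1) (hM : 0 < M)
    (hε : ε = 1 ∨ ε = -1) (hw : 0 ≤ w) :
    Pm1 q M ∘ₗ P1 q M - P1 q M ∘ₗ Pm1 q M =
      ((q ^ (-(3 : ℝ) / 2) - q ^ (-(1 : ℝ) / 2) : ℝ) : ℂ) • (P0 q M ε ∘ₗ P0 q M ε) := by
  have hε2 : ε ^ 2 = 1 := sq_eq_one_iff.2 hε
  refine linearMap_ext_e fun s => ?_
  simp only [LinearMap.sub_apply, LinearMap.smul_apply, LinearMap.comp_apply]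
  rw [Pm1_P1_e M hq0 hq1.le, P1_Pm1_e M hq0 hq1.le, P0_P0_e M hq0.le, hε2, one_mul, ← sub_smul,
    smul_smul, ← Complex.ofReal_sub, ← Complex.ofReal_mul, eigenvalue_sub_eigenvalue hq0]
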